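/- arXiv:1411.4732 — 2 statements merged into one kernel-verified Lean document; each statement's English description precedes it below -/
import Mathlib

section
/- Let Q, X, and Y be jointly distributed random variables on finite types with joint pmf p. If H(Q|X) = 0, then the joint pair (Q, X) conveys exactly as much mutual information about Y as X alone: I((Q,X) : Y) = I(X : Y). (Consequently, any Q feasible in the definition of I_∧ is feasible in the definition of I_α, so I_∧ ≤ I_α.) -/
open Real Finset

/- STATEMENT 4: If `H(Q|X) = 0`, then `I((Q,X) : Y) = I(X : Y)`, for jointly distributed
`(Q, X, Y)` with joint pmf `p : Q × X × Y → ℝ`. -/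

section Defs

variable {Q X Y : Type*} [Fintype Q] [Fintype X] [Fintype Y]

/-- Marginal of `(Q, X)`. -/
noncomputable def margQX (p : Q × X × Y → ℝ) (q : Q) (x : X) : ℝ :=
  ∑ y, p (q, x, y)

/-- Marginal of `(X, Y)`. -/
noncomputable def margXY (p : Q × X × Y → ℝ) (x : X) (y : Y) : ℝ :=
  ∑ q, p (q, x, y)

/-- Marginal of `X`. -/
noncomputable def margX (p : Q × X × Y → ℝ) (x : X) : ℝ :=
  ∑ q, ∑ y, p (q, x, y)

/-- Marginal of `Y`. -/
noncomputable def margY (p : Q × X × Y → ℝ) (y : Y) : ℝ :=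
  ∑ q, ∑ x, p (q, x, y)

/-- Conditional entropy `H(Q|X)`. -/
noncomputable def condEntQX (p : Q × X × Y → ℝ) : ℝ :=
  -∑ q, ∑ x, margQX p q x * logb 2 (margQX p q x / margX p x)

/-- Mutual information `I((Q,X) : Y)` between the pair `(Q, X)` and `Y`. -/
noncomputable def miQXY (p : Q × X × Y → ℝ) : ℝ :=
  ∑ q, ∑ x, ∑ y, p (q, x, y) * logb 2 (p (q, x, y) / (margQX p q x * margY p y))

/-- Mutual information `I(X : Y)`. -/
noncomputable def miXY (p : Q × X × Y → ℝ) : ℝ :=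
  ∑ x, ∑ y, margXY p x y * logb 2 (margXY p x y / (margX p x * margY p y))

end Defs

theorem stmt_4 {Q X Y : Type*} [Fintype Q] [Fintype X] [Fintype Y]
    (p : Q × X × Y → ℝ)
    (hnn : ∀ a, 0 ≤ p a)
    (hsum : ∑ a, p a = 1)
    (hdet : condEntQX p = 0) :
    miQXY p = miXY p := by
  have hQX0 : ∀ q x, 0 ≤ margQX p q x := fun q x => Finset.sum_nonneg fun y _ => hnn _
  have hXsum : ∀ x, margX p x = ∑ q, margQX p q x := fun x => rfl
  have hle : ∀ q x, margQX p q x ≤ margX p x := fun q x => by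
    rw [hXsum]
    exact Finset.single_le_sum (f := fun q => margQX p q x) (fun q _ => hQX0 q x)
      (Finset.mem_univ q)
  have hterm : ∀ q x, margQX p q x * logb 2 (margQX p q x / margX p x) ≤ 0 := fun q x => by
    apply mul_nonpos_of_nonneg_of_nonpos (hQX0 q x)
    have h0 : 0 ≤ margX p x := (hQX0 q x).trans (hle q x)
    exact Real.logb_nonpos (by norm_num) (div_nonneg (hQX0 q x) h0) (div_le_one_of_le₀ (hle q x) h0)
  have hz : ∀ q x, margQX p q x * logb 2 (margQX p q x / margX p x) = 0 := by
    have h1 : ∑ q, ∑ x, margQX p q x * logb 2 (margQX p q x / margX p x) = 0 :=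
      neg_eq_zero.mp hdet
    intro q x
    have h2 := (Finset.sum_eq_zero_iff_of_nonpos
      (fun q _ => Finset.sum_nonpos fun x _ => hterm q x)).mp h1 q (Finset.mem_univ q)
    exact (Finset.sum_eq_zero_iff_of_nonpos (fun x _ => hterm q x)).mp h2 x (Finset.mem_univ x)
  have hdich : ∀ q x, 0 < margQX p q x → margQX p q x = margX p x := by
    intro q x h
    have hX : 0 < margX p x := h.trans_le (hle q x)
    by_contra hne
    have hlt : margQX p q x / margX p x < 1 := (div_lt_one hX).mpr (lt_of_le_of_ne (hle q x) hne)
    have := Real.logb_neg (b := 2) (by norm_num) (div_pos h hX) hlt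
    have := mul_neg_of_pos_of_neg h this
    linarith [hz q x]
  have hple : ∀ q x y, p (q, x, y) ≤ margQX p q x := fun q x y =>
    Finset.single_le_sum (f := fun y => p (q, x, y)) (fun y _ => hnn _) (Finset.mem_univ y)
  have key : ∀ q x y, p (q, x, y) * logb 2 (p (q, x, y) / (margQX p q x * margY p y))
      = p (q, x, y) * logb 2 (margXY p x y / (margX p x * margY p y)) := by
    intro q x y
    rcases (hnn (q, x, y)).eq_or_lt with h | h
    · rw [← h]; simp
    · have hq := hdich q x (h.trans_le (hple q x y))
      have hXY : margXY p x y = p (q, x, y) := by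
        apply Finset.sum_eq_single q
        · intro q' _ hne
          have hadd : margQX p q' x + margQX p q x ≤ margX p x := by
            rw [hXsum]
            exact Finset.add_le_sum (f := fun q => margQX p q x) (fun q _ => hQX0 q x)
              (Finset.mem_univ q') (Finset.mem_univ q) hne
          linarith [hple q' x y, hnn (q', x, y)]
        · intro h; exact absurd (Finset.mem_univ q) h
      rw [hq, hXY]
  unfold miQXY miXY
  simp only [key]
  rw [Finset.sum_comm]
  refine Finset.sum_congr rfl fun x _ => ?_
  rw [Finset.sum_comm]
  refine Finset.sum_congr rfl fun y _ => ?_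
  rw [← Finset.sum_mul]
  rfl
end

section
/- Let Q, X, and Y be jointly distributed random variables on finite types with joint pmf p, and let y be a state with p_Y(y) > 0. If the state-conditional distribution of (Q, X) given y factorizes through X, i.e. p(q,x|y) = p(q|x) * p(x|y) for all q, x (equivalently, the KL divergence D_KL( p(Q,X|y) ‖ p(Q|X)·p(X|y) ) = 0), then the specific information of Q about y is at most that of X about y: I(Q:y) ≤ I(X:y). -/
open Real Finset

/- STATEMENT 5: If the state-conditional distribution of `(Q, X)` given `y` factorizes
through `X`, i.e. `p(q,x|y) = p(q|x) * p(x|y)` for all `q, x`, then the specific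
information of `Q` about `y` is at most that of `X` about `y`. -/

section Defs

variable {Q X Y : Type*} [Fintype Q] [Fintype X] [Fintype Y]

/-- Marginal of `(Q, Y)`. -/
noncomputable def margQY (p : Q × X × Y → ℝ) (q : Q) (y : Y) : ℝ :=
  ∑ x, p (q, x, y)

/-- Marginal of `Q`. -/
noncomputable def margQ (p : Q × X × Y → ℝ) (q : Q) : ℝ :=
  ∑ x, ∑ y, p (q, x, y)

/-- Specific information `I(Q : y)` of `Q` about the state `y`. -/
noncomputable def specInfoQ (p : Q × X × Y → ℝ) (y : Y) : ℝ :=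
  ∑ q, (margQY p q y / margY p y) * logb 2 ((margQY p q y / margY p y) / margQ p q)

/-- Specific information `I(X : y)` of `X` about the state `y`. -/
noncomputable def specInfoX (p : Q × X × Y → ℝ) (y : Y) : ℝ :=
  ∑ x, (margXY p x y / margY p y) * logb 2 ((margXY p x y / margY p y) / margX p x)

end Defs

theorem aux_term {a m MX MQ A B : ℝ} (ha : 0 ≤ a) (hm : 0 ≤ m) (hmX : m ≤ MX) (hmQ : m ≤ MQ)
    (hA : a ≤ A) (hB : a ≤ B) (hf : a = (m / MX) * B) :
    a - m * A / MQ ≤ a * log (B / MX) - a * log (A / MQ) := by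
  rcases ha.eq_or_lt with h0 | hpos
  · have : 0 ≤ m * A / MQ := div_nonneg (mul_nonneg hm (ha.trans hA)) (hm.trans hmQ)
    rw [← h0]; simpa using this
  · have hm' : 0 < m := by
      rcases hm.eq_or_lt with h | h
      · rw [← h] at hf; simp at hf; linarith
      · exact h
    have hMX : 0 < MX := by linarith
    have hMQ : 0 < MQ := by linarith
    have hA' : 0 < A := by linarith
    have hB' : 0 < B := by linarith
    have e : B / MX = a / m := by rw [hf]; field_simp
    have h1 := one_sub_inv_le_log_of_pos (x := (a / m) / (A / MQ)) (by positivity)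
    rw [log_div (by positivity) (by positivity)] at h1
    rw [e]
    have h2 := mul_le_mul_of_nonneg_left h1 ha
    have e2 : a * (1 - ((a / m) / (A / MQ))⁻¹) = a - m * A / MQ := by field_simp
    linarith

theorem stmt_5 {Q X Y : Type*} [Fintype Q] [Fintype X] [Fintype Y]
    (p : Q × X × Y → ℝ)
    (hnn : ∀ a, 0 ≤ p a)
    (hsum : ∑ a, p a = 1)
    (y : Y) (hy : 0 < margY p y)
    (hfact : ∀ q x, p (q, x, y) / margY p y =
      (margQX p q x / margX p x) * (margXY p x y / margY p y)) :
    specInfoQ p y ≤ specInfoX p y := by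
  have hlog : 0 < log 2 := log_pos (by norm_num)
  obtain ⟨a, had⟩ : ∃ a : Q → X → ℝ, ∀ q x, a q x = p (q, x, y) / margY p y :=
    ⟨fun q x => p (q, x, y) / margY p y, fun _ _ => rfl⟩
  have ha0 : ∀ q x, 0 ≤ a q x := fun q x => by rw [had]; exact div_nonneg (hnn _) hy.le
  have hA : ∀ q, margQY p q y / margY p y = ∑ x, a q x := fun q => by
    simp only [had, margQY, Finset.sum_div]
  have hB : ∀ x, margXY p x y / margY p y = ∑ q, a q x := fun x => by
    simp only [had, margXY, Finset.sum_div]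
  have hm0 : ∀ q x, 0 ≤ margQX p q x := fun q x => Finset.sum_nonneg fun _ _ => hnn _
  have hMX : ∀ x, margX p x = ∑ q, margQX p q x := fun x => rfl
  have hMQ : ∀ q, margQ p q = ∑ x, margQX p q x := fun q => rfl
  have hterm : ∀ q x, a q x - margQX p q x * (∑ x', a q x') / margQ p q ≤
      a q x * log ((∑ q', a q' x) / margX p x) - a q x * log ((∑ x', a q x') / margQ p q) := by
    intro q x
    apply aux_term (ha0 q x) (hm0 q x)
    · rw [hMX]
      exact Finset.single_le_sum (f := fun q => margQX p q x) (fun i _ => hm0 i x) (mem_univ q)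
    · rw [hMQ]
      exact Finset.single_le_sum (f := fun x => margQX p q x) (fun i _ => hm0 q i) (mem_univ x)
    · exact Finset.single_le_sum (f := fun x => a q x) (fun i _ => ha0 q i) (mem_univ x)
    · exact Finset.single_le_sum (f := fun q => a q x) (fun i _ => ha0 i x) (mem_univ q)
    · rw [← hB, had]; exact hfact q x
  have hrow : ∀ q, 0 ≤ ∑ x, (a q x - margQX p q x * (∑ x', a q x') / margQ p q) := by
    intro q
    rw [Finset.sum_sub_distrib, ← Finset.sum_div, ← Finset.sum_mul, ← hMQ]
    have hs : 0 ≤ ∑ x, a q x := Finset.sum_nonneg fun x _ => ha0 q x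
    by_cases h : margQ p q = 0
    · simpa [h] using hs
    · rw [mul_div_cancel_left₀ _ h]; simp
  have htot : 0 ≤ ∑ q, ∑ x, (a q x * log ((∑ q', a q' x) / margX p x) -
      a q x * log ((∑ x', a q x') / margQ p q)) :=
    Finset.sum_nonneg fun q _ => (hrow q).trans (Finset.sum_le_sum fun x _ => hterm q x)
  simp only [Finset.sum_sub_distrib] at htot
  rw [Finset.sum_comm] at htot
  simp only [← Finset.sum_mul] at htot
  unfold specInfoQ specInfoX
  simp only [hA, hB, logb, ← mul_div_assoc, ← Finset.sum_div]
  exact div_le_div_of_nonneg_right (by linarith) hlog.le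
end
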